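/- Let (U, φ) be a finite standard closure space. If A is an E-generator of some x ∈ U, then φ(A) is an essential closed set. -/

import Mathlib

namespace EBaseFormal

open Set

variable {α : Type*}

/-- `φ` is a closure operator on subsets of `α`. -/
def IsClosureOp (φ : Set α → Set α) : Prop :=
  (∀ X, X ⊆ φ X) ∧ (∀ X, φ (φ X) = φ X) ∧ ∀ X Y : Set α, X ⊆ Y → φ X ⊆ φ Y

/-- `C` is a closed set of the closure space. -/
def IsClosedSet (φ : Set α → Set α) (C : Set α) : Prop :=
  φ C = C

/-- The closure space is standard: `φ {x} \ {x}` is closed for every `x`. -/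
def IsStandard (φ : Set α → Set α) : Prop :=
  ∀ x : α, IsClosedSet φ (φ {x} \ {x})

/-- The binary part `φ^b` of the closure operator. -/
def binPart (φ : Set α → Set α) (X : Set α) : Set α :=
  ⋃ x ∈ X, φ {x}

/-- `A` is a D-generator of `x`. -/
def IsDGen (φ : Set α → Set α) (x : α) (A : Set α) : Prop :=
  x ∈ φ A ∧ x ∉ binPart φ A ∧ ∀ B : Set α, binPart φ B ⊂ binPart φ A → x ∉ φ B

/-- `A` is an E-generator of `x`: a D-generator whose closure is inclusion-minimal
among the closures of D-generators of `x`. -/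
def IsEGen (φ : Set α → Set α) (x : α) (A : Set α) : Prop :=
  IsDGen φ x A ∧ ∀ B : Set α, IsDGen φ x B → φ B ⊆ φ A → φ B = φ A

/-- The E-base of the closure space: all valid nontrivial binary implications
together with the implications `A → {x}` for `A` an E-generator of `x`. -/
def EBase (φ : Set α → Set α) : Set (Set α × Set α) :=
  {p | ∃ a x : α, p = ({a}, {x}) ∧ x ∈ φ {a} ∧ x ≠ a} ∪
    {p | ∃ (x : α) (A : Set α), p = (A, {x}) ∧ IsEGen φ x A}

/-- `Y` satisfies all implications of `S`. -/
def ImpClosedSet (S : Set (Set α × Set α)) (Y : Set α) : Prop :=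
  ∀ p ∈ S, p.1 ⊆ Y → p.2 ⊆ Y

/-- The closure of `Z` under the implications in `S`: the smallest set containing
`Z` satisfying all implications of `S`. -/
def ImpClosure (S : Set (Set α × Set α)) (Z : Set α) : Set α :=
  ⋂₀ {Y : Set α | Z ⊆ Y ∧ ImpClosedSet S Y}

/-- The E-base is valid: its induced closure operator is `φ`. -/
def EBaseValid (φ : Set α → Set α) : Prop :=
  ∀ Z : Set α, ImpClosure (EBase φ) Z = φ Z

/-- `Q` is quasi-closed. -/
def QuasiClosed (φ : Set α → Set α) (Q : Set α) : Prop :=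
  ∀ X ⊆ Q, φ X ⊂ φ Q → φ X ⊆ Q

/-- `P` is pseudo-closed: non-closed and inclusion-minimal among the quasi-closed
sets spanning `φ P`. -/
def PseudoClosed (φ : Set α → Set α) (P : Set α) : Prop :=
  ¬ IsClosedSet φ P ∧ QuasiClosed φ P ∧
    ∀ Q : Set α, QuasiClosed φ Q → φ Q = φ P → Q ⊆ P → Q = P

/-- `C` is an essential closed set. -/
def Essential (φ : Set α → Set α) (C : Set α) : Prop :=
  IsClosedSet φ C ∧ ∃ P : Set α, PseudoClosed φ P ∧ φ P = C

/-- The canonical (Duquenne–Guigues) base. -/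
def DGBase (φ : Set α → Set α) : Set (Set α × Set α) :=
  {p | ∃ P : Set α, PseudoClosed φ P ∧ p = (P, φ P \ P)}

/-- `C'` is a predecessor (lower cover) of `C` in the closure lattice. -/
def Predecessor (φ : Set α → Set α) (C' C : Set α) : Prop :=
  IsClosedSet φ C' ∧ IsClosedSet φ C ∧ C' ⊂ C ∧
    ∀ C'' : Set α, IsClosedSet φ C'' → C' ⊂ C'' → C'' ⊆ C → C'' = C

/-- The closure lattice is join-semidistributive. -/
def JoinSemidistrib (φ : Set α → Set α) : Prop :=
  ∀ C1 C2 C3 : Set α, IsClosedSet φ C1 → IsClosedSet φ C2 → IsClosedSet φ C3 →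
    φ (C1 ∪ C2) = φ (C1 ∪ C3) → φ (C1 ∪ C2) = φ (C1 ∪ C2 ∩ C3)

/-- The closure lattice is meet-semidistributive. -/
def MeetSemidistrib (φ : Set α → Set α) : Prop :=
  ∀ C1 C2 C3 : Set α, IsClosedSet φ C1 → IsClosedSet φ C2 → IsClosedSet φ C3 →
    C1 ∩ C2 = C1 ∩ C3 → C1 ∩ C2 = C1 ∩ φ (C2 ∪ C3)

/-- The closure lattice is semidistributive. -/
def Semidistrib (φ : Set α → Set α) : Prop :=
  JoinSemidistrib φ ∧ MeetSemidistrib φ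

/-- The closure lattice is modular: `a ≤ b → (b ∧ c) ∨ a = b ∧ (c ∨ a)`. -/
def ModularLattice (φ : Set α → Set α) : Prop :=
  ∀ A B C : Set α, IsClosedSet φ A → IsClosedSet φ B → IsClosedSet φ C →
    A ⊆ B → φ (B ∩ C ∪ A) = B ∩ φ (C ∪ A)

/-- The closure lattice is atomistic (in a standard space). -/
def Atomistic (φ : Set α → Set α) : Prop :=
  ∀ x : α, φ {x} = ({x} : Set α)

/-- The closure lattice is upper-semimodular. -/
def UpperSemimodular (φ : Set α → Set α) : Prop :=
  ∀ C1 C2 : Set α, IsClosedSet φ C1 → IsClosedSet φ C2 →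
    Predecessor φ (C1 ∩ C2) C1 → Predecessor φ C2 (φ (C1 ∪ C2))

/-- The closure lattice is geometric: atomistic and upper-semimodular. -/
def Geometric (φ : Set α → Set α) : Prop :=
  Atomistic φ ∧ UpperSemimodular φ

/-- `x` is prime in the lattice `(↓C, ⊆)` of closed subsets of `C`. -/
def PrimeIn (φ : Set α → Set α) (C : Set α) (x : α) : Prop :=
  ∀ C1 C2 : Set α, IsClosedSet φ C1 → IsClosedSet φ C2 → C1 ⊆ C → C2 ⊆ C →
    φ {x} ⊆ φ (C1 ∪ C2) → φ {x} ⊆ C1 ∨ φ {x} ⊆ C2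

/-- `x ∈ C` is almost prime in `(↓C, ⊆)`. -/
def AlmostPrimeIn (φ : Set α → Set α) (C : Set α) (x : α) : Prop :=
  x ∈ C ∧ ¬ PrimeIn φ C x ∧
    ∀ C' : Set α, Predecessor φ C' C → x ∈ C' → PrimeIn φ C' x

/-- `A` is a `φ^b`-minimal spanning set of the closed set `C`. -/
def BMinSpanning (φ : Set α → Set α) (C A : Set α) : Prop :=
  φ A = C ∧ ∀ B : Set α, binPart φ B ⊂ binPart φ A → φ B ≠ C

/-- `C` is join-irreducible: nonempty and whenever it is a join of two closed sets
it equals one of them. -/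
def JoinIrred (φ : Set α → Set α) (C : Set α) : Prop :=
  IsClosedSet φ C ∧ C ≠ ∅ ∧
    ∀ C1 C2 : Set α, IsClosedSet φ C1 → IsClosedSet φ C2 →
      C = φ (C1 ∪ C2) → C = C1 ∨ C = C2

/-- `C` is join-irreducible: nonempty with a unique predecessor. -/
def JoinIrredUP (φ : Set α → Set α) (C : Set α) : Prop :=
  IsClosedSet φ C ∧ C ≠ ∅ ∧ ∃! C' : Set α, Predecessor φ C' C

/-!
For an E-generator `A` of `x`, consider the set `Q` of those `y ∈ φ A` that do not imply `x` on
their own. It contains `A`, hence spans `φ A`, and it misses `x`, hence is not closed. If some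
`X ⊆ Q` with `φ X ⊊ φ A` had `x ∈ φ X`, then `X` could be refined to a D-generator of `x` whose
closure is strictly smaller than `φ A`, against the minimality of `A`; so `Q` is quasi-closed.
A minimal quasi-closed set inside `Q` spanning `φ A` is then pseudo-closed.
-/

section

variable {φ : Set α → Set α} {x y : α} {A B C Q X Y : Set α}

/-- The elements of `C` that do not imply `x` through a binary implication `{y} → {x}`. For the
closure `C` of an E-generator of `x` it is a non-closed quasi-closed set spanning `C`. -/
def nonImplying (φ : Set α → Set α) (x : α) (C : Set α) : Set α :=
  {y ∈ C | x ∉ φ {y}}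

theorem mem_binPart : y ∈ binPart φ X ↔ ∃ z ∈ X, y ∈ φ {z} := by
  simp only [binPart, mem_iUnion, exists_prop]

theorem notMem_binPart_of_subset_nonImplying (hX : X ⊆ nonImplying φ x C) :
    x ∉ binPart φ X := fun hx =>
  let ⟨_, hz, hxz⟩ := mem_binPart.1 hx
  (hX hz).2 hxz

theorem exists_isDGen_binPart_subset (hfin : (binPart φ X).Finite) (hx : x ∈ φ X)
    (hxb : x ∉ binPart φ X) : ∃ B, IsDGen φ x B ∧ binPart φ B ⊆ binPart φ X := by
  let S : Set (Set α) := {T | T ⊆ binPart φ X ∧ ∃ B, binPart φ B = T ∧ x ∈ φ B}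
  have hS : S.Finite := hfin.finite_subsets.subset fun _ hT => hT.1
  obtain ⟨_, ⟨hBX, B, rfl, hxB⟩, hmin⟩ := hS.exists_minimal ⟨_, subset_rfl, X, rfl, hx⟩
  refine ⟨B, ⟨hxB, fun h => hxb (hBX h), fun B' hB' hxB' => hB'.2 ?_⟩, hBX⟩
  exact hmin ⟨hB'.1.trans hBX, B', rfl, hxB'⟩ hB'.1

namespace IsClosureOp

theorem subset_closure (hφ : IsClosureOp φ) (X : Set α) : X ⊆ φ X :=
  hφ.1 X

theorem closure_mono (hφ : IsClosureOp φ) (h : X ⊆ Y) : φ X ⊆ φ Y :=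
  hφ.2.2 X Y h

theorem isClosedSet_closure (hφ : IsClosureOp φ) (X : Set α) : IsClosedSet φ (φ X) :=
  hφ.2.1 X

theorem closure_subset_closure (hφ : IsClosureOp φ) (h : X ⊆ φ Y) : φ X ⊆ φ Y :=
  (hφ.closure_mono h).trans (hφ.isClosedSet_closure Y).subset

theorem closure_singleton_subset (hφ : IsClosureOp φ) (hy : y ∈ φ X) : φ {y} ⊆ φ X :=
  hφ.closure_subset_closure (singleton_subset_iff.2 hy)

theorem subset_binPart (hφ : IsClosureOp φ) (X : Set α) : X ⊆ binPart φ X := fun y hy =>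
  mem_binPart.2 ⟨y, hy, hφ.subset_closure {y} rfl⟩

theorem binPart_subset_closure (hφ : IsClosureOp φ) (X : Set α) : binPart φ X ⊆ φ X :=
  iUnion₂_subset fun _ hz => hφ.closure_singleton_subset (hφ.subset_closure X hz)

theorem closure_subset_closure_of_binPart_subset (hφ : IsClosureOp φ)
    (h : binPart φ B ⊆ binPart φ X) : φ B ⊆ φ X :=
  hφ.closure_subset_closure <|
    (hφ.subset_binPart B).trans <| h.trans (hφ.binPart_subset_closure X)

theorem closure_nonImplying (hφ : IsClosureOp φ) (hx : x ∉ binPart φ A) :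
    φ (nonImplying φ x (φ A)) = φ A := by
  have hA : A ⊆ nonImplying φ x (φ A) := fun y hy =>
    ⟨hφ.subset_closure A hy, fun hxy => hx (mem_binPart.2 ⟨y, hy, hxy⟩)⟩
  exact (hφ.closure_subset_closure fun _ hy => hy.1).antisymm (hφ.closure_mono hA)

theorem notMem_nonImplying_self (hφ : IsClosureOp φ) : x ∉ nonImplying φ x C := fun hx =>
  hx.2 (hφ.subset_closure {x} rfl)

end IsClosureOp

theorem QuasiClosed.exists_pseudoClosed_subset (hQ : QuasiClosed φ Q) (hφ : IsClosureOp φ)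
    (hfin : Q.Finite) (hQcl : ¬ IsClosedSet φ Q) :
    ∃ P ⊆ Q, PseudoClosed φ P ∧ φ P = φ Q := by
  let S : Set (Set α) := {P | P ⊆ Q ∧ QuasiClosed φ P ∧ φ P = φ Q}
  have hS : S.Finite := hfin.finite_subsets.subset fun _ hP => hP.1
  obtain ⟨P, ⟨hPQ, hP, hspan⟩, hmin⟩ := hS.exists_minimal ⟨Q, subset_rfl, hQ, rfl⟩
  refine ⟨P, hPQ, ⟨fun hPcl => hQcl ?_, hP, fun R hR hRP hsub => ?_⟩, hspan⟩
  · have hQP : φ Q = P := hspan.symm.trans hPcl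
    exact (hQP.subset.trans hPQ).antisymm (hφ.subset_closure Q)
  · exact hsub.antisymm (hmin ⟨hsub.trans hPQ, hR, hRP.trans hspan⟩ hsub)

theorem QuasiClosed.essential_closure (hQ : QuasiClosed φ Q) (hφ : IsClosureOp φ)
    (hfin : Q.Finite) (hQcl : ¬ IsClosedSet φ Q) : Essential φ (φ Q) :=
  let ⟨P, _, hP, hspan⟩ := hQ.exists_pseudoClosed_subset hφ hfin hQcl
  ⟨hφ.isClosedSet_closure Q, P, hP, hspan⟩

namespace IsEGen

theorem mem_closure (hA : IsEGen φ x A) : x ∈ φ A :=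
  hA.1.1

theorem notMem_binPart (hA : IsEGen φ x A) : x ∉ binPart φ A :=
  hA.1.2.1

theorem notMem_closure_of_ssubset (hA : IsEGen φ x A) (hφ : IsClosureOp φ)
    (hfin : (binPart φ X).Finite) (hX : φ X ⊂ φ A) (hxb : x ∉ binPart φ X) : x ∉ φ X := by
  intro hx
  obtain ⟨B, hB, hBb⟩ := exists_isDGen_binPart_subset hfin hx hxb
  have hBX : φ B ⊆ φ X := hφ.closure_subset_closure_of_binPart_subset hBb
  exact (hBX.trans_ssubset hX).ne (hA.2 B hB (hBX.trans hX.subset))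

theorem quasiClosed_nonImplying (hA : IsEGen φ x A) (hφ : IsClosureOp φ)
    (hfin : (φ A).Finite) : QuasiClosed φ (nonImplying φ x (φ A)) := by
  intro X hXQ hlt y hy
  rw [hφ.closure_nonImplying hA.notMem_binPart] at hlt
  have hXfin : (binPart φ X).Finite :=
    hfin.subset ((hφ.binPart_subset_closure X).trans hlt.subset)
  have hxX : x ∉ φ X :=
    hA.notMem_closure_of_ssubset hφ hXfin hlt (notMem_binPart_of_subset_nonImplying hXQ)
  exact ⟨hlt.subset hy, fun hxy => hxX (hφ.closure_singleton_subset hy hxy)⟩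

end IsEGen

theorem statement8_general (hφ : IsClosureOp φ) (hA : IsEGen φ x A) (hfin : (φ A).Finite) :
    Essential φ (φ A) := by
  have hspan : φ (nonImplying φ x (φ A)) = φ A := hφ.closure_nonImplying hA.notMem_binPart
  have hncl : ¬ IsClosedSet φ (nonImplying φ x (φ A)) := fun hcl =>
    hφ.notMem_nonImplying_self ((hspan.symm.trans hcl).subset hA.mem_closure)
  rw [← hspan]
  exact (hA.quasiClosed_nonImplying hφ hfin).essential_closure hφ
    (hfin.subset fun _ hy => hy.1) hncl

end

/-- the closure of an E-generator is an essential closed set. -/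
theorem statement8 {α : Type*} [Fintype α] (φ : Set α → Set α)
    (hφ : IsClosureOp φ) (hstd : IsStandard φ) (x : α) (A : Set α)
    (hA : IsEGen φ x A) :
    Essential φ (φ A) :=
  statement8_general hφ hA (toFinite _)

end EBaseFormal
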